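/- Let G_1 and G_2 be two vertex-disjoint 2-edge-colored graphs with Hamiltonian alternating cycles C_1 = x_0 x_1 ⋯ x_{2n−1} x_0 and C_2 = y_0 y_1 ⋯ y_{2m−1} y_0 respectively, and let G ∈ G_1 ⊕ G_2. Suppose there is no good pair in G, and for each i ∈ {1,2} there is a vertex of C_i that is non-singular with respect to C_{3−i}. Let d = gcd(n, m) and M_2 = max{n, m}. Then for each vertex w ∈ V(G) and each even integer l ∈ [2 + 2d, 2M_2], there is an alternating cycle of length l in G passing through w. -/

import Mathlib

/-- An alternating cycle of length `N` in the 2-edge-colored graph `(G, c)`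
(colors: `true` = red, `false` = blue). -/
def IsAltCycle {V : Type*} (G : SimpleGraph V) (c : Sym2 V → Bool) {N : ℕ}
    (x : ZMod N → V) : Prop :=
  Function.Injective x ∧ (∀ i, G.Adj (x i) (x (i + 1))) ∧
    ∀ i, c s(x i, x (i + 1)) ≠ c s(x (i + 1), x (i + 2))

/-- There is a good pair of edges between the two vertex-disjoint alternating
cycles `x` and `y`. -/
def HasGoodPair {V : Type*} (G : SimpleGraph V) (c : Sym2 V → Bool) {N M : ℕ}
    (x : ZMod N → V) (y : ZMod M → V) : Prop :=
  ∃ (s s' : ZMod N) (t t' : ZMod M),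
    (s' = s - 1 ∨ s' = s + 1) ∧ (t' = t - 1 ∨ t' = t + 1) ∧
    G.Adj (x s) (y t) ∧ G.Adj (x s') (y t') ∧
    c s(x s, x s') = c s(x s, y t) ∧
    c s(x s', y t') = c s(x s, y t) ∧
    c s(y t', y t) = c s(x s, y t)

/-- `G` is a colored generalized sum `G ∈ G₁ ⊕ G₂` of two vertex-disjoint 2-edge-colored
graphs `G₁`, `G₂` with Hamiltonian alternating cycles `C₁ = x` (of length `2n`) and
`C₂ = y` (of length `2m`): here `G₁`, `G₂` are the induced colored subgraphs of `G` on
`V(G₁) = range x` and `V(G₂) = range y`, so the conditions are that `x` and `y` are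
alternating cycles of `G` with disjoint ranges covering `V(G)` (Hamiltonicity of `Cᵢ`
in `Gᵢ`), and between any two vertices of different parts there is exactly one
(arbitrarily colored) edge of `G`. -/
def IsCGSHam {V : Type*} (G : SimpleGraph V) (c : Sym2 V → Bool) {n m : ℕ}
    (x : ZMod (2 * n) → V) (y : ZMod (2 * m) → V) : Prop :=
  IsAltCycle G c x ∧ IsAltCycle G c y ∧
  Disjoint (Set.range x) (Set.range y) ∧
  (∀ v : V, v ∈ Set.range x ∪ Set.range y) ∧
  (∀ (i : ZMod (2 * n)) (j : ZMod (2 * m)), G.Adj (x i) (y j))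

/-- The set of exterior edges of a colored generalized sum with parts `range x` and
`range y`: the edges joining the two parts. -/
def extEdges {V : Type*} {N M : ℕ} (x : ZMod N → V) (y : ZMod M → V) : Set (Sym2 V) :=
  {e | ∃ i j, e = s(x i, y j)}

/-- The number of red exterior edges incident with `v`. -/
noncomputable def dred {V : Type*} (c : Sym2 V → Bool) {N M : ℕ}
    (x : ZMod N → V) (y : ZMod M → V) (v : V) : ℕ :=
  {e : Sym2 V | e ∈ extEdges x y ∧ v ∈ e ∧ c e = true}.ncard

/-- The number of blue exterior edges incident with `v`. -/
noncomputable def dblue {V : Type*} (c : Sym2 V → Bool) {N M : ℕ}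
    (x : ZMod N → V) (y : ZMod M → V) (v : V) : ℕ :=
  {e : Sym2 V | e ∈ extEdges x y ∧ v ∈ e ∧ c e = false}.ncard

/-- The vertex `x i` of `C₁` is singular with respect to `C₂`: the set of edges from
`x i` to `V(C₂)` (in a colored generalized sum these are all pairs `x i - y j`) is
nonempty and they all have the same color. -/
def SingularX {V : Type*} (c : Sym2 V → Bool) {N M : ℕ}
    (x : ZMod N → V) (y : ZMod M → V) (i : ZMod N) : Prop :=
  (∃ _j : ZMod M, True) ∧ ∀ j j' : ZMod M, c s(x i, y j) = c s(x i, y j')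

/-- The vertex `y j` of `C₂` is singular with respect to `C₁`. -/
def SingularY {V : Type*} (c : Sym2 V → Bool) {N M : ℕ}
    (x : ZMod N → V) (y : ZMod M → V) (j : ZMod M) : Prop :=
  (∃ _i : ZMod N, True) ∧ ∀ i i' : ZMod N, c s(x i, y j) = c s(x i', y j)

/-!
Index both cycles by `ℤ` so that the `i`-th edge is red exactly when `i` is even. Without good
pairs, the edges `X i Y j` with `i + j = 2 * k + 1` alternate in color, so they are all determined
by one Boolean, the phase of `k`, which has periods `n` and `m` and hence `d = gcd n m`. If the
phase is not constant, it drops from `true` to `false` between some `k` and `k + 1`. An arc of `X`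
followed by an arc of `Y` then closes up to an alternating cycle when the edge leading to `Y` has
index `k` modulo `d` and the edge leading back has index `k + 1`; the freedom modulo `d` yields all
the required lengths, and moving the two arcs in opposite directions makes the cycle pass through
any prescribed vertex. The edges with `i + j` even are handled by reflecting `Y`. If both phases
are constant, the color of `X i Y j` depends only on `i` or only on `j`, so all vertices of one of
the cycles are singular.
-/

section Periodic

open Function

theorem eq_of_monotone_of_periodic {α β : Type*} [AddCommGroup α] [LinearOrder α]
    [IsOrderedAddMonoid α] [Archimedean α] [PartialOrder β] {f : α → β} {T : α} (hT : 0 < T)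
    (hf : Monotone f) (hper : Periodic f T) (a b : α) : f a = f b := by
  suffices h : ∀ a b, f a ≤ f b from (h a b).antisymm (h b a)
  intro a b
  obtain ⟨k, hk⟩ := Archimedean.arch (a - b) hT
  calc f a ≤ f (b + k • T) := hf (sub_le_iff_le_add'.mp hk)
    _ = f b := hper.nsmul k b

theorem exists_true_false_succ_of_periodic {f : ℤ → Bool} {T : ℤ} (hT : 0 < T)
    (hper : Periodic f T) {a b : ℤ} (hab : f a ≠ f b) :
    ∃ k, f k = true ∧ f (k + 1) = false := by
  by_contra! hcon
  have hmono : Monotone f := monotone_int_of_le_succ fun k hk ↦ by simpa using hcon k hk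
  exact hab (eq_of_monotone_of_periodic hT hmono hper a b)

theorem periodic_int_gcd {β : Type*} {f : ℤ → β} {a b : ℤ} (ha : Periodic f a)
    (hb : Periodic f b) : Periodic f (Int.gcd a b) := by
  rw [Int.gcd_eq_gcd_ab, mul_comm a, mul_comm b]
  exact (ha.int_mul _).add_period (hb.int_mul _)

end Periodic

-- Arcs with `p` and `q` edges give a cycle of length `p + q + 2 = 2 * h`; its two connecting edges
-- have suitable indices `k` modulo `d` and `k + 1` exactly when `p - q = 2 * (r * d - 1)`.
theorem exists_arc_lengths {N M d h : ℕ} (hd : 0 < d) (hN : d ≤ N) (hM : d ≤ M) (h2 : 2 ≤ h)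
    (hlt : 2 * h + d ≤ N + M + 1) :
    ∃ (p q : ℕ) (r : ℤ), p < N ∧ q < M ∧ (p : ℤ) = h - 2 + r * d ∧ (q : ℤ) = h - r * d := by
  suffices hr : ∃ r : ℤ, 2 - (h : ℤ) ≤ r * d ∧ (h : ℤ) - M + 1 ≤ r * d ∧
      r * d ≤ h ∧ r * d ≤ (N : ℤ) + 1 - h by
    obtain ⟨r, hp, hq, hq', hp'⟩ := hr
    exact ⟨(h - 2 + r * d).toNat, (h - r * d).toNat, r, by lia, by lia, by lia, by lia⟩
  obtain hsmall | hlarge := Nat.lt_or_ge (2 * h - 1) d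
  · exact ⟨0, by lia⟩
  · obtain ⟨r, ⟨hle, hlt'⟩, -⟩ := existsUnique_add_zsmul_mem_Ico (a := (d : ℤ)) (by lia) 0
      (max (2 - (h : ℤ)) (h - M + 1))
    rw [zero_add, smul_eq_mul] at hle hlt'
    exact ⟨r, by lia⟩

/-- The color of the `i`-th edge of an alternating walk indexed so that its `0`-th edge is red. -/
def stdColor (i : ℤ) : Bool := decide (Even i)

theorem stdColor_eq_iff {i j : ℤ} : stdColor i = stdColor j ↔ Even (i - j) := by
  rw [stdColor, stdColor, decide_eq_decide, Int.even_sub]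

theorem stdColor_eq_not_iff {i j : ℤ} : (stdColor i = !stdColor j) ↔ Odd (i - j) := by
  rw [Bool.eq_not, Ne, stdColor_eq_iff, Int.not_even_iff_odd]

theorem stdColor_add_one (i : ℤ) : stdColor (i + 1) = !stdColor i :=
  stdColor_eq_not_iff.2 (by simp)

theorem eq_stdColor_of_alternating {f : ℤ → Bool} (hf : ∀ i, f (i + 1) = !f i)
    (h0 : f 0 = true) (i : ℤ) : f i = stdColor i := by
  have hper : Function.Periodic (fun i ↦ f i == stdColor i) 1 := fun i ↦ by
    simp [hf, stdColor_add_one]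
  have hconst : (f i == stdColor i) = (f 0 == stdColor 0) := by
    simpa only [Int.cast_id, mul_one] using hper.int_mul_eq i
  simpa [h0, stdColor] using hconst

theorem exists_shift_eq_stdColor {f : ℤ → Bool} (hf : ∀ i, f (i + 1) = !f i) :
    ∃ s, ∀ i, f (i + s) = stdColor i := by
  obtain ⟨s, hs⟩ : ∃ s, f s = true := by
    cases h0 : f 0 with
    | true => exact ⟨0, h0⟩
    | false => exact ⟨0 + 1, by rw [hf, h0, Bool.not_false]⟩
  refine ⟨s, eq_stdColor_of_alternating (fun i ↦ ?_) (by rwa [zero_add])⟩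
  rw [add_right_comm, hf]

section Traversal

variable {V : Type*} {G : SimpleGraph V} {c : Sym2 V → Bool} {n m : ℕ} {X Y : ℤ → V}

/-- `X` runs periodically around an alternating cycle of length `2 * n`, indexed so that the edge
from `X 0` to `X 1` is red. Indexing by `ℤ` makes the parity of an index meaningful. -/
structure StdTraversal (G : SimpleGraph V) (c : Sym2 V → Bool) (n : ℕ) (X : ℤ → V) : Prop where
  eq_iff : ∀ i j, X i = X j ↔ i ≡ j [ZMOD 2 * n]
  adj : ∀ i, G.Adj (X i) (X (i + 1))
  color : ∀ i, c s(X i, X (i + 1)) = stdColor i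

theorem IsAltCycle.exists_stdTraversal {x : ZMod (2 * n) → V} (hx : IsAltCycle G c x) :
    ∃ s : ZMod (2 * n), StdTraversal G c n fun i ↦ x (i + s) := by
  obtain ⟨hinj, hadj, halt⟩ := hx
  obtain ⟨s, hs⟩ := exists_shift_eq_stdColor (f := fun i : ℤ ↦ c s(x i, x (i + 1))) fun i ↦ by
    rw [Bool.eq_not]
    push_cast
    rw [add_assoc, one_add_one_eq_two]
    exact (halt i).symm
  refine ⟨s, fun i j ↦ ?_, fun i ↦ ?_, fun i ↦ ?_⟩
  · rw [hinj.eq_iff, add_left_inj, ZMod.intCast_eq_intCast_iff]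
    push_cast
    rfl
  · simpa [add_right_comm] using hadj (i + s)
  · simpa [add_right_comm] using hs i

namespace StdTraversal

theorem periodic (hX : StdTraversal G c n X) : Function.Periodic X (2 * n) := fun _ ↦
  (hX.eq_iff _ _).2 Int.add_modEq_right

theorem injOn_arc (hX : StdTraversal G c n X) (a : ℤ) :
    Set.InjOn (fun i : ℕ ↦ X (a + i)) (Set.Iio (2 * n)) := fun i hi j hj hij ↦
  Nat.ModEq.eq_of_lt_of_lt
    (Int.natCast_modEq_iff.1 (by exact_mod_cast ((hX.eq_iff _ _).1 hij).add_left_cancel' a)) hi hj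

theorem reflect (hX : StdTraversal G c n X) : StdTraversal G c n fun i ↦ X (1 - i) where
  eq_iff i j := by
    rw [hX.eq_iff, Int.modEq_comm, Int.modEq_iff_dvd, Int.modEq_iff_dvd, sub_sub_sub_cancel_left]
  adj i := by simpa [neg_add_eq_sub] using (hX.adj (-i)).symm
  color i := by
    have hcolor := hX.color (-i)
    rw [Sym2.eq_swap, neg_add_eq_sub] at hcolor
    rw [add_comm i, sub_add_cancel_left, hcolor, stdColor_eq_iff]
    exact ⟨-i, by ring⟩

end StdTraversal

theorem isAltCycle_of_seq {l : ℕ} [NeZero l] (hl : Even l) {W : ℕ → V} {a : ℤ}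
    (hinj : Set.InjOn W (Set.Iio l))
    (hstep : ∀ i < l, G.Adj (W i) (W ((i + 1) % l)) ∧
      c s(W i, W ((i + 1) % l)) = stdColor (a + i)) :
    IsAltCycle G c fun i : ZMod l ↦ W i.val := by
  have hval (i : ZMod l) : (i + 1).val = (i.val + 1) % l := by
    simp [ZMod.val_add, ZMod.val_one_eq_one_mod]
  have hcolor (i : ZMod l) : c s(W i.val, W (i + 1).val) = stdColor (a + i.val) := by
    rw [hval]
    exact (hstep _ i.val_lt).2
  refine ⟨fun i j hij ↦ ZMod.val_injective l (hinj i.val_lt j.val_lt hij), fun i ↦ ?_, fun i ↦ ?_⟩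
  · simpa only [hval] using (hstep _ i.val_lt).1
  · have hparity : Even (i.val + 1 + (i + 1).val) := by
      rw [hval, Nat.even_add, hl.mod_even_iff]
    rw [← one_add_one_eq_two, ← add_assoc, hcolor, hcolor, Ne, stdColor_eq_iff]
    obtain ⟨r, hr⟩ := hparity
    rintro ⟨t, ht⟩
    lia

/-- The vertices `X a, …, X (a + p)` followed by `Y b, Y (b + 1), …`. -/
def splice (X Y : ℤ → V) (a b : ℤ) (p i : ℕ) : V :=
  if i ≤ p then X (a + i) else Y (b + (i - (p + 1) : ℕ))

theorem splice_of_le {a b : ℤ} {p i : ℕ} (hi : i ≤ p) : splice X Y a b p i = X (a + i) :=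
  if_pos hi

theorem splice_add_one_add (a b : ℤ) (p i : ℕ) : splice X Y a b p (p + 1 + i) = Y (b + i) := by
  simp [splice, add_assoc]

namespace StdTraversal

theorem splice_injOn (hX : StdTraversal G c n X) (hY : StdTraversal G c m Y)
    (hXY : ∀ i j, X i ≠ Y j) (a b : ℤ) {p q : ℕ} (hp : p < 2 * n) (hq : q < 2 * m) :
    Set.InjOn (splice X Y a b p) (Set.Iio (p + q + 2)) := by
  have hcases (i : ℕ) : i ≤ p ∨ ∃ k, i = p + 1 + k :=
    (le_or_gt i p).imp_right Nat.exists_eq_add_of_le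
  intro i hi j hj hij
  rw [Set.mem_Iio] at hi hj
  obtain hip | ⟨i, rfl⟩ := hcases i <;> obtain hjp | ⟨j, rfl⟩ := hcases j
  · rw [splice_of_le hip, splice_of_le hjp] at hij
    exact hX.injOn_arc a (hip.trans_lt hp) (hjp.trans_lt hp) hij
  · rw [splice_of_le hip, splice_add_one_add] at hij
    exact absurd hij (hXY _ _)
  · rw [splice_of_le hjp, splice_add_one_add] at hij
    exact absurd hij.symm (hXY _ _)
  · rw [splice_add_one_add, splice_add_one_add] at hij
    rw [hY.injOn_arc b (show i < 2 * m by lia) (show j < 2 * m by lia) hij]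

theorem splice_step (hX : StdTraversal G c n X) (hY : StdTraversal G c m Y)
    (hXY : ∀ i j, G.Adj (X i) (Y j)) {a b : ℤ} {p q : ℕ} (hab : Even (b - (a + p + 1)))
    (hleave : c s(X (a + p), Y b) = stdColor (a + p))
    (hreturn : c s(Y (b + q), X a) = stdColor (b + q)) {i : ℕ} (hi : i < p + q + 2) :
    G.Adj (splice X Y a b p i) (splice X Y a b p ((i + 1) % (p + q + 2))) ∧
      c s(splice X Y a b p i, splice X Y a b p ((i + 1) % (p + q + 2))) = stdColor (a + i) := by
  obtain hip | rfl | hip := lt_trichotomy i p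
  · rw [Nat.mod_eq_of_lt (by lia), splice_of_le hip.le, splice_of_le hip, Nat.cast_succ,
      ← add_assoc]
    exact ⟨hX.adj _, hX.color _⟩
  · rw [Nat.mod_eq_of_lt (by lia), splice_of_le le_rfl, ← add_zero (i + 1), splice_add_one_add,
      Nat.cast_zero, add_zero]
    exact ⟨hXY _ _, hleave⟩
  · obtain ⟨k, rfl⟩ := Nat.exists_eq_add_of_le hip
    have hcolor : stdColor (a + (p + 1 + k : ℕ)) = stdColor (b + k) := by
      rw [eq_comm, stdColor_eq_iff]
      convert hab using 1
      push_cast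
      ring
    rw [hcolor, splice_add_one_add]
    obtain rfl | hkq : k = q ∨ k < q := by lia
    · rw [show p + 1 + k + 1 = p + k + 2 by ring, Nat.mod_self, splice_of_le p.zero_le,
        Nat.cast_zero, add_zero]
      exact ⟨(hXY _ _).symm, hreturn⟩
    · rw [Nat.mod_eq_of_lt (by lia), add_assoc _ k, splice_add_one_add, Nat.cast_succ, ← add_assoc]
      exact ⟨hY.adj _, hY.color _⟩

theorem exists_isAltCycle_splice (hX : StdTraversal G c n X) (hY : StdTraversal G c m Y)
    (hXY : ∀ i j, G.Adj (X i) (Y j)) {a b : ℤ} {p q : ℕ} (hp : p < 2 * n) (hq : q < 2 * m)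
    (hpq : Even (p + q)) (hab : Even (b - (a + p + 1)))
    (hleave : c s(X (a + p), Y b) = stdColor (a + p))
    (hreturn : c s(Y (b + q), X a) = stdColor (b + q)) :
    ∃ z : ZMod (p + q + 2) → V,
      IsAltCycle G c z ∧ X a ∈ Set.range z ∧ Y (b + q) ∈ Set.range z := by
  have hinj := hX.splice_injOn hY (fun i j ↦ (hXY i j).ne) a b hp hq
  have hcycle := isAltCycle_of_seq (hpq.add even_two) hinj fun i hi ↦
    hX.splice_step hY hXY hab hleave hreturn hi
  have hlast : ((p + 1 + q : ℕ) : ZMod (p + q + 2)).val = p + 1 + q :=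
    ZMod.val_natCast_of_lt (by lia)
  exact ⟨_, hcycle, ⟨0, by simp [splice_of_le]⟩, ⟨(p + 1 + q : ℕ), by
    simpa only [hlast] using splice_add_one_add a b p q⟩⟩

end StdTraversal

/-- Traversals `X` and `Y` of two alternating cycles of lengths `2 * n` and `2 * m` that are
completely joined to each other and form no good pair. -/
structure StdPair (G : SimpleGraph V) (c : Sym2 V → Bool) (n m : ℕ) (X Y : ℤ → V) : Prop where
  left : StdTraversal G c n X
  right : StdTraversal G c m Y
  adj : ∀ i j, G.Adj (X i) (Y j)
  no_good_pair : ∀ i j j', j' = j - 1 ∨ j' = j + 1 → c s(X i, Y j) = stdColor i →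
    c s(Y j, Y j') = stdColor i → c s(X (i + 1), Y j') ≠ stdColor i

theorem StdPair.of_not_hasGoodPair {x : ZMod (2 * n) → V} {y : ZMod (2 * m) → V}
    (hxy : ∀ i j, G.Adj (x i) (y j)) (hgp : ¬ HasGoodPair G c x y) {s : ZMod (2 * n)}
    {t : ZMod (2 * m)} (hX : StdTraversal G c n fun i ↦ x (i + s))
    (hY : StdTraversal G c m fun j ↦ y (j + t)) :
    StdPair G c n m (fun i ↦ x (i + s)) fun j ↦ y (j + t) where
  left := hX
  right := hY
  adj i j := hxy _ _
  no_good_pair i j j' hj hij hjj' hij' := by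
    refine hgp ⟨i + s, (i + 1 : ℤ) + s, j + t, j' + t, Or.inr (by push_cast; ring), ?_,
      hxy _ _, hxy _ _, (hX.color i).trans hij.symm, hij'.trans hij.symm, ?_⟩
    · exact hj.imp (by rintro rfl; push_cast; ring) (by rintro rfl; push_cast; ring)
    · rw [Sym2.eq_swap, hjj', hij]

/-- The color of the edge from `X 0` to `Y (2 * k + 1)`, which determines the colors of all edges
from `X i` to `Y j` with `i + j = 2 * k + 1`. -/
def phase (c : Sym2 V → Bool) (X Y : ℤ → V) (k : ℤ) : Bool := c s(X 0, Y (2 * k + 1))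

namespace StdPair

-- Reflecting `Y` exchanges the edges with `i + j` even and those with `i + j` odd.
theorem reflect (h : StdPair G c n m X Y) : StdPair G c n m X fun j ↦ Y (1 - j) where
  left := h.left
  right := h.right.reflect
  adj i j := h.adj _ _
  no_good_pair i j j' hj := h.no_good_pair i (1 - j) (1 - j') (by lia)

-- Along the antidiagonal, agreement with `stdColor i` passes from `(i, j)` to `(i + 1, j - 1)`, as
-- otherwise these two edges form a good pair; by periodicity it holds everywhere or nowhere.
theorem color_eq (h : StdPair G c n m X Y) (hn : 0 < n) (hm : 0 < m) {i j k : ℤ}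
    (hijk : i + j = 2 * k + 1) : c s(X i, Y j) = (stdColor i == phase c X Y k) := by
  let f (i : ℤ) : Bool := c s(X i, Y (2 * k + 1 - i)) == stdColor i
  have hmono : Monotone f := monotone_int_of_le_succ fun i hi ↦ by
    have hedge : c s(Y (2 * k + 1 - i), Y (2 * k + 1 - (i + 1))) = stdColor i := by
      have hcolor := h.right.color (2 * k + 1 - (i + 1))
      rw [Sym2.eq_swap] at hcolor
      rw [show 2 * k + 1 - i = 2 * k + 1 - (i + 1) + 1 by ring, hcolor, stdColor_eq_iff]
      exact ⟨k - i, by ring⟩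
    have hnext := h.no_good_pair i _ _ (by lia) (by simpa [f] using hi) hedge
    simpa [f, stdColor_add_one, Bool.eq_not] using hnext
  have hper : Function.Periodic f (2 * n * m) := fun i ↦ by
    have hX : X (i + 2 * n * m) = X i := by
      simpa [mul_comm] using h.left.periodic.int_mul m i
    have hY : Y (2 * k + 1 - (i + 2 * n * m)) = Y (2 * k + 1 - i) := by
      rw [← sub_sub]
      simpa [mul_comm, mul_left_comm] using
        (h.right.periodic.int_mul n).sub_eq (2 * k + 1 - i)
    have hcolor : stdColor (i + 2 * n * m) = stdColor i := stdColor_eq_iff.2 ⟨n * m, by ring⟩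
    simp only [f, hX, hY, hcolor]
  have hconst : f i = f 0 :=
    eq_of_monotone_of_periodic (by positivity) hmono hper i 0
  have h0 : stdColor 0 = true := rfl
  have bool_eq : ∀ u v w : Bool, (u == v) = (w == true) → u = (v == w) := by decide
  rw [show j = 2 * k + 1 - i by lia]
  exact bool_eq _ _ _ (by simpa only [f, sub_zero, h0, phase] using hconst)

theorem phase_periodic_left (h : StdPair G c n m X Y) (hn : 0 < n) (hm : 0 < m) :
    Function.Periodic (phase c X Y) n := fun k ↦ by
  have hcolor : c s(X (2 * n), Y (2 * k + 1)) = (stdColor (2 * n) == phase c X Y (k + n)) :=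
    h.color_eq hn hm (by ring)
  simpa [phase, stdColor, h.left.periodic.eq] using hcolor.symm

theorem phase_periodic_right (h : StdPair G c n m X Y) :
    Function.Periodic (phase c X Y) m := fun k ↦ by
  rw [phase, phase, mul_add, add_right_comm, h.right.periodic]

theorem phase_periodic_gcd (h : StdPair G c n m X Y) (hn : 0 < n) (hm : 0 < m) :
    Function.Periodic (phase c X Y) (Nat.gcd n m) :=
  periodic_int_gcd (h.phase_periodic_left hn hm) h.phase_periodic_right

theorem exists_isAltCycle_of_jump (h : StdPair G c n m X Y) (hn : 0 < n) (hm : 0 < m)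
    {a b k r : ℤ} {p q : ℕ} (hp : p < 2 * n) (hq : q < 2 * m)
    (hleave : a + p + b = 2 * (k + r * Nat.gcd n m) + 1) (hreturn : a + (b + q) = 2 * (k + 1) + 1)
    (htrue : phase c X Y k = true) (hfalse : phase c X Y (k + 1) = false) :
    ∃ z : ZMod (p + q + 2) → V,
      IsAltCycle G c z ∧ X a ∈ Set.range z ∧ Y (b + q) ∈ Set.range z := by
  refine h.left.exists_isAltCycle_splice h.right h.adj hp hq (by grind) (by grind) ?_ ?_
  · have hphase : phase c X Y (k + r * Nat.gcd n m) = true :=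
      ((h.phase_periodic_gcd hn hm).int_mul r k).trans htrue
    rw [h.color_eq hn hm hleave, hphase, beq_true]
  · rw [Sym2.eq_swap, h.color_eq hn hm hreturn, hfalse, beq_false, eq_comm,
      stdColor_eq_not_iff]
    exact ⟨k + 1 - a, by lia⟩

theorem exists_isAltCycle_of_phase_ne (h : StdPair G c n m X Y) (hn : 0 < n) (hm : 0 < m)
    {k k' : ℤ} (hk : phase c X Y k ≠ phase c X Y k') {w : V}
    (hw : w ∈ Set.range X ∪ Set.range Y) {l : ℕ} (hl : Even l) (hl4 : 4 ≤ l)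
    (hlt : l + Nat.gcd n m ≤ 2 * (n + m) + 1) :
    ∃ z : ZMod l → V, IsAltCycle G c z ∧ w ∈ Set.range z := by
  obtain ⟨k₀, htrue, hfalse⟩ :=
    exists_true_false_succ_of_periodic (by exact_mod_cast hm) h.phase_periodic_right hk
  have hdn : Nat.gcd n m ≤ n := Nat.gcd_le_left m hn
  have hdm : Nat.gcd n m ≤ m := Nat.gcd_le_right n hm
  obtain ⟨half, hhalf⟩ := hl.two_dvd
  obtain ⟨p, q, r, hp, hq, hpr, hqr⟩ :=
    exists_arc_lengths (N := 2 * n) (M := 2 * m) (Nat.gcd_pos_of_pos_left m hn)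
      (by lia) (by lia) (show 2 ≤ half by lia) (by lia)
  obtain rfl : l = p + q + 2 := by lia
  have hcycle (a b : ℤ) (hab : a + (b + q) = 2 * (k₀ + 1) + 1) :=
    h.exists_isAltCycle_of_jump (r := r) hn hm hp hq (by lia) hab htrue hfalse
  obtain ⟨i, rfl⟩ | ⟨j, rfl⟩ := hw
  · obtain ⟨z, hz, hX, -⟩ := hcycle i (2 * (k₀ + 1) + 1 - i - q) (by ring)
    exact ⟨z, hz, hX⟩
  · obtain ⟨z, hz, -, hY⟩ := hcycle (2 * (k₀ + 1) + 1 - j) (j - q) (by ring)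
    exact ⟨z, hz, by rwa [sub_add_cancel] at hY⟩

theorem color_eq_of_phase_const (h : StdPair G c n m X Y) (hn : 0 < n) (hm : 0 < m)
    (hodd : ∀ k k', phase c X Y k = phase c X Y k')
    (heven : ∀ k k', phase c X (fun j ↦ Y (1 - j)) k = phase c X (fun j ↦ Y (1 - j)) k') :
    (∀ i j j', c s(X i, Y j) = c s(X i, Y j')) ∨ ∀ j i i', c s(X i, Y j) = c s(X i', Y j) := by
  obtain ⟨δ, hδ⟩ : ∃ δ, ∀ k, phase c X Y k = δ := ⟨_, fun k ↦ hodd k 0⟩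
  obtain ⟨ε, hε⟩ : ∃ ε, ∀ k, phase c X (fun j ↦ Y (1 - j)) k = ε := ⟨_, fun k ↦ heven k 0⟩
  have hcolor (i j : ℤ) : c s(X i, Y j) = (stdColor i == if Odd (i + j) then δ else ε) := by
    split_ifs with hij
    · obtain ⟨k, hk⟩ := hij
      rw [h.color_eq hn hm hk, hδ]
    · obtain ⟨k, hk⟩ := Int.not_odd_iff_even.1 hij
      have hreflect := h.reflect.color_eq hn hm (i := i) (j := 1 - j) (k := i - k) (by lia)
      rwa [sub_sub_cancel, hε] at hreflect
  obtain rfl | hne := eq_or_ne δ ε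
  · exact .inl fun i j j' ↦ by rw [hcolor, hcolor, ite_self, ite_self]
  · refine .inr fun j i i' ↦ ?_
    have hpar (i : ℤ) : c s(X i, Y j) = (stdColor j == ε) := by
      rw [hcolor]
      split_ifs with hij
      · rw [stdColor_eq_not_iff.2 (show Odd (i - j) by grind), Bool.eq_not.2 hne]
        simp
      · rw [stdColor_eq_iff.2 (show Even (i - j) by grind)]
    rw [hpar, hpar]

theorem exists_isAltCycle (h : StdPair G c n m X Y) (hn : 0 < n) (hm : 0 < m)
    (hX : ∃ i j j', c s(X i, Y j) ≠ c s(X i, Y j'))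
    (hY : ∃ j i i', c s(X i, Y j) ≠ c s(X i', Y j)) {w : V}
    (hw : w ∈ Set.range X ∪ Set.range Y) {l : ℕ} (hl : Even l) (hl4 : 4 ≤ l)
    (hlt : l + Nat.gcd n m ≤ 2 * (n + m) + 1) :
    ∃ z : ZMod l → V, IsAltCycle G c z ∧ w ∈ Set.range z := by
  by_cases hodd : ∀ k k', phase c X Y k = phase c X Y k'
  · by_cases heven : ∀ k k', phase c X (fun j ↦ Y (1 - j)) k = phase c X (fun j ↦ Y (1 - j)) k'
    · obtain hindep | hindep := h.color_eq_of_phase_const hn hm hodd heven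
      · obtain ⟨i, j, j', hne⟩ := hX
        exact absurd (hindep i j j') hne
      · obtain ⟨j, i, i', hne⟩ := hY
        exact absurd (hindep j i i') hne
    · push Not at heven
      obtain ⟨k, k', hk⟩ := heven
      refine h.reflect.exists_isAltCycle_of_phase_ne hn hm hk ?_ hl hl4 hlt
      rwa [show (fun j ↦ Y (1 - j)) = Y ∘ Equiv.subLeft 1 from rfl, EquivLike.range_comp]
  · push Not at hodd
    obtain ⟨k, k', hk⟩ := hodd
    exact h.exists_isAltCycle_of_phase_ne hn hm hk hw hl hl4 hlt

end StdPair

theorem alt_cycles_gcd_range_general {x : ZMod (2 * n) → V} {y : ZMod (2 * m) → V} (hn : 0 < n)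
    (hm : 0 < m) (hx : IsAltCycle G c x) (hy : IsAltCycle G c y)
    (hxy : ∀ i j, G.Adj (x i) (y j)) (hgp : ¬ HasGoodPair G c x y)
    (hns1 : ∃ i, ¬ SingularX c x y i) (hns2 : ∃ j, ¬ SingularY c x y j) {w : V}
    (hw : w ∈ Set.range x ∪ Set.range y) {l : ℕ} (hl : Even l) (hl4 : 4 ≤ l)
    (hlt : l + Nat.gcd n m ≤ 2 * (n + m) + 1) :
    ∃ z : ZMod l → V, IsAltCycle G c z ∧ w ∈ Set.range z := by
  have hsurj {N : ℕ} (s : ZMod N) : Function.Surjective fun i : ℤ ↦ (i : ZMod N) + s :=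
    (Equiv.addRight s).surjective.comp ZMod.intCast_surjective
  obtain ⟨s, hX⟩ := hx.exists_stdTraversal
  obtain ⟨t, hY⟩ := hy.exists_stdTraversal
  refine (StdPair.of_not_hasGoodPair hxy hgp hX hY).exists_isAltCycle hn hm ?_ ?_ ?_ hl hl4 hlt
  · simpa [SingularX, (hsurj s).exists, (hsurj t).exists] using hns1
  · simpa [SingularY, (hsurj s).exists, (hsurj t).exists] using hns2
  · rwa [← (hsurj s).range_comp x, ← (hsurj t).range_comp y] at hw

end Traversal

/-- Let `G ∈ G₁ ⊕ G₂` where `G₁`, `G₂` have Hamiltonian alternating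
cycles `C₁ = x` (length `2n`), `C₂ = y` (length `2m`). If `G` has no good pair and each
`Cᵢ` has a vertex that is non-singular with respect to `C_{3-i}`, then with
`d = gcd n m` and `M₂ = max n m`, for each vertex `w` of `G` and each even
`l ∈ [2 + 2d, 2·M₂]` there is an alternating cycle of length `l` in `G` passing
through `w`. -/
theorem alt_cycles_gcd_range {V : Type*} (G : SimpleGraph V) (c : Sym2 V → Bool)
    {n m : ℕ} (hn : 0 < n) (hm : 0 < m)
    (x : ZMod (2 * n) → V) (y : ZMod (2 * m) → V)
    (hG : IsCGSHam G c x y) (hgp : ¬ HasGoodPair G c x y)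
    (hns1 : ∃ i, ¬ SingularX c x y i) (hns2 : ∃ j, ¬ SingularY c x y j) :
    ∀ w : V, ∀ l : ℕ, Even l → 2 + 2 * Nat.gcd n m ≤ l → l ≤ 2 * max n m →
      ∃ z : ZMod l → V, IsAltCycle G c z ∧ w ∈ Set.range z := by
  obtain ⟨hx, hy, -, hcover, hxy⟩ := hG
  have hdn : Nat.gcd n m ≤ n := Nat.gcd_le_left m hn
  have hdm : Nat.gcd n m ≤ m := Nat.gcd_le_right n hm
  have hd : 0 < Nat.gcd n m := Nat.gcd_pos_of_pos_left m hn
  exact fun w l hl hlow hhigh ↦ alt_cycles_gcd_range_general hn hm hx hy hxy hgp hns1 hns2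
    (hcover w) hl (by lia) (by lia)
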